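/- There exists a constant C > 0 such that for every positive integer M, setting N = M³ and σ = M, and for every function u that is four times continuously differentiable on a neighbourhood of [0,1]² and vanishes on the boundary of [0,1]², the two-scale interpolant satisfies |||u − Î_{N,N}u||| ≤ C N^{−1} (|u|₂ + ‖∂⁴u/∂x²∂y²‖_{0,Ω}). -/

import Mathlib

open MeasureTheory Finset

noncomputable section

/-- The hat function `ψ_i^N` on the uniform mesh of `[0,1]` with `N` intervals. -/
def hat (N i : ℕ) (x : ℝ) : ℝ :=
  if ((i : ℝ) - 1) / N ≤ x ∧ x ≤ (i : ℝ) / N then N * (x - ((i : ℝ) - 1) / N)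
  else if (i : ℝ) / N ≤ x ∧ x ≤ ((i : ℝ) + 1) / N then N * (((i : ℝ) + 1) / N - x)
  else 0

/-- The nodal piecewise bilinear interpolant `I_{Nx,Ny} u`. -/
def interp (Nx Ny : ℕ) (u : ℝ × ℝ → ℝ) : ℝ × ℝ → ℝ := fun p =>
  ∑ i ∈ range (Nx + 1), ∑ j ∈ range (Ny + 1),
    u ((i : ℝ) / Nx, (j : ℝ) / Ny) * hat Nx i p.1 * hat Ny j p.2

/-- The one-directional interpolant `I_{Nx,0} u` (interpolation in the `x`-direction only). -/
def interpX (Nx : ℕ) (u : ℝ × ℝ → ℝ) : ℝ × ℝ → ℝ := fun p =>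
  ∑ i ∈ range (Nx + 1), u ((i : ℝ) / Nx, p.2) * hat Nx i p.1

/-- The one-directional interpolant `I_{0,Ny} u` (interpolation in the `y`-direction only). -/
def interpY (Ny : ℕ) (u : ℝ × ℝ → ℝ) : ℝ × ℝ → ℝ := fun p =>
  ∑ j ∈ range (Ny + 1), u (p.1, (j : ℝ) / Ny) * hat Ny j p.2

/-- The two-scale interpolant `Î_{N,N} u = I_{N,σ}u + I_{σ,N}u − I_{σ,σ}u`. -/
def twoScale (N σ : ℕ) (u : ℝ × ℝ → ℝ) : ℝ × ℝ → ℝ := fun p =>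
  interp N σ u p + interp σ N u p - interp σ σ u p

/-- The multiscale interpolant
`I^{(k)}_{N,N} u = Σ_{i=0}^{k} I_{N/2^i, N/2^{k−i}}u − Σ_{i=1}^{k} I_{N/2^i, N/2^{k+1−i}}u`. -/
def msInterp (N k : ℕ) (u : ℝ × ℝ → ℝ) : ℝ × ℝ → ℝ := fun p =>
  ∑ i ∈ range (k + 1), interp (N / 2 ^ i) (N / 2 ^ (k - i)) u p
    - ∑ i ∈ Finset.Icc 1 k, interp (N / 2 ^ i) (N / 2 ^ (k + 1 - i)) u p

/-- The closed square `[0,1]²`. -/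
def unitSquare : Set (ℝ × ℝ) := Set.Icc (0 : ℝ) 1 ×ˢ Set.Icc (0 : ℝ) 1

/-- The open square `Ω = (0,1)²`. -/
def Omega2 : Set (ℝ × ℝ) := Set.Ioo (0 : ℝ) 1 ×ˢ Set.Ioo (0 : ℝ) 1

/-- Partial derivative in `x` (defined a.e. for Lipschitz functions; junk value `0` elsewhere). -/
def pderivX (v : ℝ × ℝ → ℝ) : ℝ × ℝ → ℝ := fun p => deriv (fun x => v (x, p.2)) p.1

/-- Partial derivative in `y` (defined a.e. for Lipschitz functions; junk value `0` elsewhere). -/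
def pderivY (v : ℝ × ℝ → ℝ) : ℝ × ℝ → ℝ := fun p => deriv (fun y => v (p.1, y)) p.2

/-- The `L²(Ω)` norm `‖v‖_{0,Ω}`. -/
def L2norm (v : ℝ × ℝ → ℝ) : ℝ := Real.sqrt (∫ p in Omega2, (v p) ^ 2)

/-- The energy norm `|||v||| = (∫_Ω |∇v|² + ∫_Ω v²)^{1/2}`, gradients taken a.e. -/
def energyNorm (v : ℝ × ℝ → ℝ) : ℝ :=
  Real.sqrt (∫ p in Omega2, ((pderivX v p) ^ 2 + (pderivY v p) ^ 2 + (v p) ^ 2))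

/-- `u` is four times continuously differentiable on a neighbourhood of `[0,1]²`. -/
def C4Near (u : ℝ × ℝ → ℝ) : Prop :=
  ∃ U : Set (ℝ × ℝ), IsOpen U ∧ unitSquare ⊆ U ∧ ContDiffOn ℝ 4 u U

/-- `u` vanishes on the boundary of `[0,1]²`. -/
def VanishOnBoundary (u : ℝ × ℝ → ℝ) : Prop :=
  ∀ p ∈ unitSquare, (p.1 = 0 ∨ p.1 = 1 ∨ p.2 = 0 ∨ p.2 = 1) → u p = 0

/-- The seminorm `|u|₂ = ‖u_xx‖_{0,Ω} + ‖u_xy‖_{0,Ω} + ‖u_yy‖_{0,Ω}`. -/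
def semi2 (u : ℝ × ℝ → ℝ) : ℝ :=
  L2norm (pderivX (pderivX u)) + L2norm (pderivX (pderivY u)) + L2norm (pderivY (pderivY u))

/-- The mixed fourth derivative `∂⁴u/∂x²∂y²`. -/
def uxxyy (u : ℝ × ℝ → ℝ) : ℝ × ℝ → ℝ := pderivX (pderivX (pderivY (pderivY u)))

/-- The bilinear form `B(v,w) = ∫_Ω ∇v·∇w + ∫_Ω v w`, gradients taken a.e. -/
def Bform (v w : ℝ × ℝ → ℝ) : ℝ :=
  ∫ p in Omega2, (pderivX v p * pderivX w p + pderivY v p * pderivY w p + v p * w p)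

/-!
The error of one-dimensional piecewise linear interpolation on a cell of length `h` is at most
`h ‖f'‖` and `h² ‖f''‖`, and its derivative is at most `h ‖f''‖`, because each of these functions
either vanishes somewhere on the cell or is a convex combination of differences of values of `f`.
By Fubini the same bounds hold for the interpolation errors `E_n` in `x` and `F_n` in `y` on the
square. Expanding the interpolants `I_{n,m} = (1 - E_n) (1 - F_m)`, the errors `E_σ` and `F_σ` on
the coarse mesh cancel:

`u - Î_{N,N} u = E_N u + F_N u - E_N F_σ u - E_σ F_N u + E_σ F_σ u`.

The first two terms are of order `N⁻¹ |u|₂` in the energy norm; the last three are bounded by the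
mixed derivative `u_xxyy` alone, with factors `N⁻¹ σ⁻²`, `σ⁻¹ N⁻²` and `σ⁻³`. The choice `N = σ³`
balances `N⁻¹` with `σ⁻³`.
-/

open scoped ENNReal

/-! ### `Lᵖ` seminorms and smooth extension -/

theorem eLpNorm_le_measure_univ_mul_of_enorm_le {α E F : Type*} {m : MeasurableSpace α}
    {μ : Measure α} [NormedAddCommGroup E] [NormedAddCommGroup F] {f : α → E} {g : α → F}
    {p : ℝ≥0∞} (hp : 1 ≤ p) (hg : AEStronglyMeasurable g μ)
    (hfg : ∀ᵐ x ∂μ, ‖f x‖ₑ ≤ eLpNorm g 1 μ) :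
    eLpNorm f p μ ≤ μ Set.univ * eLpNorm g p μ := by
  have hexp : 0 ≤ 1 - p.toReal⁻¹ := by
    rcases eq_or_ne p ∞ with rfl | hp_top
    · simp
    · exact sub_nonneg.2 (inv_le_one_of_one_le₀ (by simpa using ENNReal.toReal_mono hp_top hp))
  calc eLpNorm f p μ
      ≤ eLpNorm g 1 μ * μ Set.univ ^ p.toReal⁻¹ := eLpNorm_le_of_ae_enorm_bound hfg
    _ ≤ eLpNorm g p μ * μ Set.univ ^ (1 - p.toReal⁻¹) * μ Set.univ ^ p.toReal⁻¹ := by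
        gcongr
        simpa using eLpNorm_le_eLpNorm_mul_rpow_measure_univ hp hg
    _ = μ Set.univ * eLpNorm g p μ := by
        rw [mul_assoc, ← ENNReal.rpow_add_of_nonneg _ _ hexp (by positivity), sub_add_cancel,
          ENNReal.rpow_one, mul_comm]

theorem eLpNorm_restrict_biUnion_le {α ι E F : Type*} {m : MeasurableSpace α} {μ : Measure α}
    [NormedAddCommGroup E] [NormedAddCommGroup F] {f : α → E} {g : α → F} {p c : ℝ≥0∞}
    (hp : p ≠ 0) (hp_top : p ≠ ∞) {t : Finset ι} {s : ι → Set α}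
    (hdisj : Set.PairwiseDisjoint (t : Set ι) s) (hs : ∀ i ∈ t, MeasurableSet (s i))
    (hfg : ∀ i ∈ t, eLpNorm f p (μ.restrict (s i)) ≤ c * eLpNorm g p (μ.restrict (s i))) :
    eLpNorm f p (μ.restrict (⋃ i ∈ t, s i)) ≤ c * eLpNorm g p (μ.restrict (⋃ i ∈ t, s i)) := by
  have hpos : 0 < p.toReal := ENNReal.toReal_pos hp hp_top
  rw [← ENNReal.rpow_le_rpow_iff hpos, ENNReal.mul_rpow_of_nonneg _ _ hpos.le]
  simp only [eLpNorm_eq_lintegral_rpow_enorm_toReal hp hp_top, one_div,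
    ENNReal.rpow_inv_rpow hpos.ne', lintegral_biUnion_finset hdisj hs, Finset.mul_sum] at hfg ⊢
  refine Finset.sum_le_sum fun i hi => ?_
  have := ENNReal.rpow_le_rpow (hfg i hi) hpos.le
  rwa [ENNReal.mul_rpow_of_nonneg _ _ hpos.le, ENNReal.rpow_inv_rpow hpos.ne',
    ENNReal.rpow_inv_rpow hpos.ne'] at this

theorem eLpNorm_prod_le_of_forall_slice {α β E F : Type*} {mα : MeasurableSpace α}
    {mβ : MeasurableSpace β} {μ : Measure α} {ν : Measure β} [SFinite ν]
    [NormedAddCommGroup E] [NormedAddCommGroup F] {f : α × β → E} {g : α × β → F}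
    {p c : ℝ≥0∞} (hp : p ≠ 0) (hp_top : p ≠ ∞) (hg : AEStronglyMeasurable g (μ.prod ν))
    (hfg : ∀ x, eLpNorm (fun y => f (x, y)) p ν ≤ c * eLpNorm (fun y => g (x, y)) p ν) :
    eLpNorm f p (μ.prod ν) ≤ c * eLpNorm g p (μ.prod ν) := by
  have hpos : 0 < p.toReal := ENNReal.toReal_pos hp hp_top
  have hmeas : AEMeasurable (fun z => ‖g z‖ₑ ^ p.toReal) (μ.prod ν) := hg.enorm.pow_const _
  have hslice := fun x => ENNReal.rpow_le_rpow (hfg x) hpos.le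
  rw [← ENNReal.rpow_le_rpow_iff hpos]
  simp only [ENNReal.mul_rpow_of_nonneg _ _ hpos.le,
    eLpNorm_eq_lintegral_rpow_enorm_toReal hp hp_top, one_div,
    ENNReal.rpow_inv_rpow hpos.ne'] at hslice ⊢
  calc ∫⁻ z, ‖f z‖ₑ ^ p.toReal ∂μ.prod ν
      ≤ ∫⁻ x, ∫⁻ y, ‖f (x, y)‖ₑ ^ p.toReal ∂ν ∂μ := lintegral_prod_le _
    _ ≤ ∫⁻ x, c ^ p.toReal * ∫⁻ y, ‖g (x, y)‖ₑ ^ p.toReal ∂ν ∂μ := lintegral_mono hslice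
    _ = c ^ p.toReal * ∫⁻ z, ‖g z‖ₑ ^ p.toReal ∂μ.prod ν := by
        rw [lintegral_const_mul'' _ hmeas.lintegral_prod_right', lintegral_prod _ hmeas]

theorem eLpNorm_add_sub_sub_add_le {α E : Type*} {m : MeasurableSpace α} {μ : Measure α}
    [NormedAddCommGroup E] {f₁ f₂ f₃ f₄ f₅ : α → E} {p : ℝ≥0∞} (hp : 1 ≤ p)
    (h₁ : AEStronglyMeasurable f₁ μ) (h₂ : AEStronglyMeasurable f₂ μ)
    (h₃ : AEStronglyMeasurable f₃ μ) (h₄ : AEStronglyMeasurable f₄ μ)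
    (h₅ : AEStronglyMeasurable f₅ μ) :
    eLpNorm (f₁ + f₂ - f₃ - f₄ + f₅) p μ ≤
      eLpNorm f₁ p μ + eLpNorm f₂ p μ + eLpNorm f₃ p μ + eLpNorm f₄ p μ + eLpNorm f₅ p μ := by
  grw [eLpNorm_add_le (((h₁.add h₂).sub h₃).sub h₄) h₅ hp,
    eLpNorm_sub_le ((h₁.add h₂).sub h₃) h₄ hp, eLpNorm_sub_le (h₁.add h₂) h₃ hp,
    eLpNorm_add_le h₁ h₂ hp]

theorem sq_eLpNorm_two {α E : Type*} {m : MeasurableSpace α} {μ : Measure α}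
    [NormedAddCommGroup E] (f : α → E) : eLpNorm f 2 μ ^ 2 = ∫⁻ x, ‖f x‖ₑ ^ 2 ∂μ := by
  simpa using eLpNorm_nnreal_pow_eq_lintegral (f := f) (μ := μ) (p := 2) two_ne_zero

theorem exists_contDiff_eqOn_of_isClosed {E F : Type*} [NormedAddCommGroup E] [NormedSpace ℝ E]
    [FiniteDimensional ℝ E] [NormedAddCommGroup F] [NormedSpace ℝ F] {n : ℕ∞} {f : E → F}
    {K U : Set E} (hK : IsClosed K) (hU : IsOpen U) (hKU : K ⊆ U) (hf : ContDiffOn ℝ n f U) :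
    ∃ g, ContDiff ℝ n g ∧ Set.EqOn g f K := by
  obtain ⟨φ, hφ_zero, hφ_one, -⟩ := exists_contMDiffMap_zero_one_nhds_of_isClosed (n := n)
    (modelWithCornersSelf ℝ E) hU.isClosed_compl hK
    (Set.disjoint_compl_left_iff_subset.2 hKU)
  refine ⟨fun x => φ x • f x, contDiff_iff_contDiffAt.2 fun x => ?_, fun x hx => ?_⟩
  · by_cases hxU : x ∈ U
    · exact φ.contMDiff.contDiff.contDiffAt.smul (hf.contDiffAt (hU.mem_nhds hxU))
    · refine contDiffAt_const (c := (0 : F)).congr_of_eventuallyEq ?_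
      filter_upwards [hφ_zero.filter_mono (nhds_le_nhdsSet hxU)] with y hy
      rw [hy, zero_smul]
  · simp only [hφ_one.self_of_nhdsSet x hx, one_smul]

/-! ### Interpolation by a chord -/

section Poincare

variable {E : Type*} [NormedAddCommGroup E] [NormedSpace ℝ E] {f : ℝ → E} {a b x y : ℝ}
  {p : ℝ≥0∞}

theorem enorm_sub_le_eLpNorm_deriv (hf : ContDiff ℝ 1 f) (hx : x ∈ Set.Icc a b)
    (hy : y ∈ Set.Icc a b) :
    ‖f x - f y‖ₑ ≤ eLpNorm (deriv f) 1 (volume.restrict (Set.Icc a b)) := by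
  wlog hyx : y ≤ x generalizing x y
  · rw [← enorm_neg, neg_sub]
    exact this hy hx (le_of_not_ge hyx)
  rw [eLpNorm_one_eq_lintegral_enorm]
  exact (enorm_sub_le_lintegral_deriv_of_contDiffOn_Icc hf.contDiffOn hyx).trans
    (lintegral_mono_set (Set.Icc_subset_Icc hy.1 hx.2))

theorem eLpNorm_le_mul_eLpNorm_deriv_of_enorm_le (hp : 1 ≤ p) {g : ℝ → E} (hf : ContDiff ℝ 1 f)
    (hgf : ∀ x ∈ Set.Icc a b,
      ‖g x‖ₑ ≤ eLpNorm (deriv f) 1 (volume.restrict (Set.Icc a b))) :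
    eLpNorm g p (volume.restrict (Set.Icc a b)) ≤
      ENNReal.ofReal (b - a) * eLpNorm (deriv f) p (volume.restrict (Set.Icc a b)) := by
  simpa using eLpNorm_le_measure_univ_mul_of_enorm_le hp
    (hf.continuous_deriv le_rfl).aestronglyMeasurable
    (ae_restrict_of_forall_mem measurableSet_Icc hgf)

theorem eLpNorm_le_mul_eLpNorm_deriv_of_eq_zero (hp : 1 ≤ p) (hf : ContDiff ℝ 1 f)
    (hx : x ∈ Set.Icc a b) (hfx : f x = 0) :
    eLpNorm f p (volume.restrict (Set.Icc a b)) ≤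
      ENNReal.ofReal (b - a) * eLpNorm (deriv f) p (volume.restrict (Set.Icc a b)) :=
  eLpNorm_le_mul_eLpNorm_deriv_of_enorm_le hp hf fun y hy => by
    simpa [hfx] using enorm_sub_le_eLpNorm_deriv hf hy hx

end Poincare

section Chord

variable {f : ℝ → ℝ} {a b x : ℝ} {p : ℝ≥0∞}

/-- The error of interpolating `f` on `[a, b]` by its chord, that is, by the affine function that
agrees with `f` at `a` and at `b`. -/
def chordErr (f : ℝ → ℝ) (a b x : ℝ) : ℝ := f x - (f a + slope f a b * (x - a))

theorem contDiff_chordErr {n : WithTop ℕ∞} (hf : ContDiff ℝ n f) :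
    ContDiff ℝ n (chordErr f a b) := by
  unfold chordErr
  fun_prop

theorem deriv_chordErr (hf : Differentiable ℝ f) :
    deriv (chordErr f a b) = fun x => deriv f x - slope f a b := by
  funext x
  have hline : HasDerivAt (fun x => f a + slope f a b * (x - a)) (slope f a b) x := by
    simpa using (((hasDerivAt_id x).sub_const a).const_mul (slope f a b)).const_add (f a)
  exact ((hf x).hasDerivAt.sub hline).deriv

theorem enorm_chordErr_le (hf : ContDiff ℝ 1 f) (hab : a < b) (hx : x ∈ Set.Icc a b) :
    ‖chordErr f a b x‖ₑ ≤ eLpNorm (deriv f) 1 (volume.restrict (Set.Icc a b)) := by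
  have hba : 0 < b - a := sub_pos.2 hab
  set t := (x - a) / (b - a)
  have ht : 0 ≤ t := div_nonneg (sub_nonneg.2 hx.1) hba.le
  have ht' : 0 ≤ 1 - t := sub_nonneg.2 ((div_le_one hba).2 (by linarith [hx.2]))
  have hconv : chordErr f a b x = (1 - t) * (f x - f a) + t * (f x - f b) := by
    simp only [chordErr, slope_def_field, t]
    field_simp
    ring
  have hxa := enorm_sub_le_eLpNorm_deriv hf hx (Set.left_mem_Icc.2 hab.le)
  have hxb := enorm_sub_le_eLpNorm_deriv hf hx (Set.right_mem_Icc.2 hab.le)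
  calc ‖chordErr f a b x‖ₑ
      ≤ ‖1 - t‖ₑ * ‖f x - f a‖ₑ + ‖t‖ₑ * ‖f x - f b‖ₑ := by
        rw [hconv, ← enorm_mul, ← enorm_mul]
        exact enorm_add_le _ _
    _ ≤ (‖1 - t‖ₑ + ‖t‖ₑ) * eLpNorm (deriv f) 1 (volume.restrict (Set.Icc a b)) := by
        rw [add_mul]
        gcongr
    _ = eLpNorm (deriv f) 1 (volume.restrict (Set.Icc a b)) := by
        rw [Real.enorm_of_nonneg ht, Real.enorm_of_nonneg ht', ← ENNReal.ofReal_add ht' ht]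
        simp

theorem eLpNorm_chordErr_le (hp : 1 ≤ p) (hf : ContDiff ℝ 1 f) (hab : a < b) :
    eLpNorm (chordErr f a b) p (volume.restrict (Set.Icc a b)) ≤
      ENNReal.ofReal (b - a) * eLpNorm (deriv f) p (volume.restrict (Set.Icc a b)) :=
  eLpNorm_le_mul_eLpNorm_deriv_of_enorm_le hp hf fun _ hx => enorm_chordErr_le hf hab hx

theorem eLpNorm_deriv_chordErr_le (hp : 1 ≤ p) (hf : ContDiff ℝ 2 f) (hab : a < b) :
    eLpNorm (deriv (chordErr f a b)) p (volume.restrict (Set.Icc a b)) ≤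
      ENNReal.ofReal (b - a) * eLpNorm (deriv (deriv f)) p (volume.restrict (Set.Icc a b)) := by
  have hdiff : Differentiable ℝ f := hf.differentiable two_ne_zero
  obtain ⟨c, hc, hslope⟩ := exists_deriv_eq_slope f hab hf.continuous.continuousOn
    hdiff.differentiableOn
  have hderiv : deriv (deriv (chordErr f a b)) = deriv (deriv f) := by
    funext x
    simp [deriv_chordErr hdiff]
  have hC1 : ContDiff ℝ 1 (deriv (chordErr f a b)) := (contDiff_chordErr hf).deriv' (n := 1)
  rw [← hderiv]
  refine eLpNorm_le_mul_eLpNorm_deriv_of_eq_zero hp hC1 (Set.Ioo_subset_Icc_self hc) ?_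
  simp [deriv_chordErr hdiff, slope_def_field, hslope]

theorem eLpNorm_chordErr_le_sq (hp : 1 ≤ p) (hf : ContDiff ℝ 2 f) (hab : a < b) :
    eLpNorm (chordErr f a b) p (volume.restrict (Set.Icc a b)) ≤
      ENNReal.ofReal (b - a) ^ 2 *
        eLpNorm (deriv (deriv f)) p (volume.restrict (Set.Icc a b)) := by
  have hzero : chordErr f a b a = 0 := by simp [chordErr]
  calc eLpNorm (chordErr f a b) p (volume.restrict (Set.Icc a b))
      ≤ ENNReal.ofReal (b - a) *
          eLpNorm (deriv (chordErr f a b)) p (volume.restrict (Set.Icc a b)) :=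
        eLpNorm_le_mul_eLpNorm_deriv_of_eq_zero hp
          (contDiff_chordErr (hf.of_le one_le_two)) (Set.left_mem_Icc.2 hab.le) hzero
    _ ≤ ENNReal.ofReal (b - a) ^ 2 *
          eLpNorm (deriv (deriv f)) p (volume.restrict (Set.Icc a b)) := by
        rw [sq, mul_assoc]
        gcongr
        exact eLpNorm_deriv_chordErr_le hp hf hab

end Chord

/-! ### Piecewise linear interpolation on a uniform mesh -/

section Mesh

variable {n k : ℕ} {x : ℝ}

theorem hat_eq_max (hn : 0 < n) (i : ℕ) (x : ℝ) : hat n i x = max 0 (1 - |n * x - i|) := by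
  have hn' : (0 : ℝ) < n := Nat.cast_pos.2 hn
  simp only [hat, div_le_iff₀' hn', le_div_iff₀' hn', mul_sub, mul_div_cancel₀ _ hn'.ne']
  split_ifs with hleft hright
  · rw [abs_of_nonpos (by linarith), max_eq_right (by linarith)]
    ring
  · rw [abs_of_nonneg (by linarith), max_eq_right (by linarith)]
    ring
  · rw [max_eq_left]
    by_contra! hpos
    obtain ⟨hlo, hhi⟩ := abs_lt.1 (sub_pos.1 hpos)
    rcases le_total (n * x) i with hx | hx
    · exact hleft ⟨by linarith, hx⟩
    · exact hright ⟨hx, by linarith⟩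

theorem lipschitzWith_hat (hn : 0 < n) (i : ℕ) : LipschitzWith n (hat n i) := by
  have hlin : LipschitzWith n fun x : ℝ => (n : ℝ) * x - i :=
    LipschitzWith.of_dist_le_mul fun x y => by
      simp [Real.dist_eq, ← mul_sub, abs_mul]
  have habs : LipschitzWith 1 fun t : ℝ => 1 - |t| :=
    LipschitzWith.of_dist_le_mul fun x y => by
      rw [NNReal.coe_one, one_mul, Real.dist_eq, Real.dist_eq, sub_sub_sub_cancel_left,
        abs_sub_comm x]
      exact abs_abs_sub_abs_le_abs_sub y x
  rw [funext (hat_eq_max hn i)]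
  simpa using (habs.comp hlin).const_max 0

theorem hat_eq_zero (hn : 0 < n) {i : ℕ} (hi : 1 ≤ |n * x - i|) : hat n i x = 0 := by
  rw [hat_eq_max hn, max_eq_left (by linarith)]

/-- The `k`-th cell `[k / n, (k + 1) / n]` of the uniform mesh of `[0, 1]` with `n` intervals. -/
def meshCell (n k : ℕ) : Set ℝ := Set.Icc ((k : ℝ) / n) ((k + 1 : ℕ) / n)

theorem monotone_node (n : ℕ) : Monotone fun k : ℕ => (k : ℝ) / n := fun i j hij => by
  simp only
  gcongr

theorem node_lt_node_succ (hn : 0 < n) (k : ℕ) : (k : ℝ) / n < (k + 1 : ℕ) / n := by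
  gcongr
  exact k.lt_succ_self

theorem node_succ_sub_node (n k : ℕ) : ((k + 1 : ℕ) : ℝ) / n - k / n = (n : ℝ)⁻¹ := by
  rw [← sub_div]
  simp

theorem sum_mul_hat_of_mem_meshCell (hn : 0 < n) (hk : k < n) (hx : x ∈ meshCell n k)
    (c : ℕ → ℝ) :
    ∑ i ∈ range (n + 1), c i * hat n i x = c k * (k + 1 - n * x) + c (k + 1) * (n * x - k) := by
  have hn' : (0 : ℝ) < n := Nat.cast_pos.2 hn
  obtain ⟨hlo, hhi⟩ := hx
  rw [div_le_iff₀' hn'] at hlo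
  rw [le_div_iff₀' hn', Nat.cast_succ] at hhi
  rw [Finset.sum_eq_add_of_mem k (k + 1) (by simp; omega) (by simpa) k.lt_succ_self.ne]
  · rw [hat_eq_max hn, hat_eq_max hn, Nat.cast_succ, abs_of_nonneg (by linarith),
      abs_of_nonpos (by linarith), max_eq_right (by linarith), max_eq_right (by linarith)]
    ring
  · rintro i - ⟨hik, hik'⟩
    rw [hat_eq_zero hn, mul_zero]
    rcases lt_or_ge i k with h | h
    · have : (i : ℝ) + 1 ≤ k := mod_cast h
      exact le_abs.2 (.inl (by linarith))
    · have : (k : ℝ) + 2 ≤ i := mod_cast (by omega : k + 2 ≤ i)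
      exact le_abs.2 (.inr (by linarith))

/-- The error of the piecewise linear interpolation of `f` at the nodes `i / n`. -/
def interpErr (n : ℕ) (f : ℝ → ℝ) (x : ℝ) : ℝ :=
  f x - ∑ i ∈ range (n + 1), f ((i : ℝ) / n) * hat n i x

theorem interpErr_eqOn_chordErr (hn : 0 < n) (hk : k < n) (f : ℝ → ℝ) :
    Set.EqOn (interpErr n f) (chordErr f (k / n) ((k + 1 : ℕ) / n)) (meshCell n k) := by
  intro x hx
  have hn' : (n : ℝ) ≠ 0 := (Nat.cast_pos.2 hn).ne'
  rw [interpErr, chordErr, sum_mul_hat_of_mem_meshCell hn hk hx fun i => f (i / n), slope_def_field,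
    node_succ_sub_node]
  field_simp
  ring

theorem deriv_interpErr_eqOn (hn : 0 < n) (hk : k < n) (f : ℝ → ℝ) :
    Set.EqOn (deriv (interpErr n f)) (deriv (chordErr f (k / n) ((k + 1 : ℕ) / n)))
      (interior (meshCell n k)) :=
  ((interpErr_eqOn_chordErr hn hk f).mono interior_subset).deriv isOpen_interior

theorem biUnion_range_Ioc_node (hn : 0 < n) :
    ⋃ k ∈ range n, Set.Ioc ((k : ℝ) / n) ((k + 1 : ℕ) / n) = Set.Ioc 0 1 := by
  simpa [hn.ne'] using (monotone_node n).biUnion_Ico_Ioc_map_succ 0 n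

theorem eLpNorm_Ioo_le_of_forall_meshCell {f g : ℝ → ℝ} {p c : ℝ≥0∞} (hn : 0 < n) (hp : p ≠ 0)
    (hp_top : p ≠ ∞)
    (hfg : ∀ k < n, eLpNorm f p (volume.restrict (meshCell n k)) ≤
      c * eLpNorm g p (volume.restrict (meshCell n k))) :
    eLpNorm f p (volume.restrict (Set.Ioo 0 1)) ≤
      c * eLpNorm g p (volume.restrict (Set.Ioo 0 1)) := by
  rw [restrict_Ioo_eq_restrict_Ioc, ← biUnion_range_Ioc_node hn]
  refine eLpNorm_restrict_biUnion_le hp hp_top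
    ((monotone_node n).pairwise_disjoint_on_Ioc_succ.set_pairwise _) (fun _ _ => measurableSet_Ioc)
    fun k hk => ?_
  rw [restrict_Ioc_eq_restrict_Icc]
  exact hfg k (Finset.mem_range.1 hk)

theorem ofReal_node_succ_sub_node (hn : 0 < n) (k : ℕ) :
    ENNReal.ofReal ((k + 1 : ℕ) / n - k / n) = (n : ℝ≥0∞)⁻¹ := by
  rw [node_succ_sub_node, ENNReal.ofReal_inv_of_pos (Nat.cast_pos.2 hn), ENNReal.ofReal_natCast]

theorem eLpNorm_interpErr_meshCell {f : ℝ → ℝ} {p : ℝ≥0∞} (hn : 0 < n) (hk : k < n) :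
    eLpNorm (interpErr n f) p (volume.restrict (meshCell n k)) =
      eLpNorm (chordErr f (k / n) ((k + 1 : ℕ) / n)) p (volume.restrict (meshCell n k)) :=
  eLpNorm_congr_ae
    (ae_restrict_of_forall_mem measurableSet_Icc (interpErr_eqOn_chordErr hn hk f))

theorem eLpNorm_deriv_interpErr_meshCell {f : ℝ → ℝ} {p : ℝ≥0∞} (hn : 0 < n) (hk : k < n) :
    eLpNorm (deriv (interpErr n f)) p (volume.restrict (meshCell n k)) =
      eLpNorm (deriv (chordErr f (k / n) ((k + 1 : ℕ) / n))) p
        (volume.restrict (meshCell n k)) := by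
  have hcell := deriv_interpErr_eqOn hn hk f
  rw [meshCell, interior_Icc] at hcell
  rw [meshCell, ← restrict_Ioo_eq_restrict_Icc]
  exact eLpNorm_congr_ae (ae_restrict_of_forall_mem measurableSet_Ioo hcell)

section Estimates

variable {f : ℝ → ℝ} {p : ℝ≥0∞}

theorem eLpNorm_interpErr_le (hn : 0 < n) (hp : 1 ≤ p) (hp_top : p ≠ ∞) (hf : ContDiff ℝ 1 f) :
    eLpNorm (interpErr n f) p (volume.restrict (Set.Ioo 0 1)) ≤
      (n : ℝ≥0∞)⁻¹ * eLpNorm (deriv f) p (volume.restrict (Set.Ioo 0 1)) := by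
  refine eLpNorm_Ioo_le_of_forall_meshCell hn (one_pos.trans_le hp).ne' hp_top fun k hk => ?_
  rw [eLpNorm_interpErr_meshCell hn hk, ← ofReal_node_succ_sub_node hn k]
  exact eLpNorm_chordErr_le hp hf (node_lt_node_succ hn k)

theorem eLpNorm_interpErr_le_sq (hn : 0 < n) (hp : 1 ≤ p) (hp_top : p ≠ ∞)
    (hf : ContDiff ℝ 2 f) :
    eLpNorm (interpErr n f) p (volume.restrict (Set.Ioo 0 1)) ≤
      (n : ℝ≥0∞)⁻¹ ^ 2 * eLpNorm (deriv (deriv f)) p (volume.restrict (Set.Ioo 0 1)) := by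
  refine eLpNorm_Ioo_le_of_forall_meshCell hn (one_pos.trans_le hp).ne' hp_top fun k hk => ?_
  rw [eLpNorm_interpErr_meshCell hn hk, ← ofReal_node_succ_sub_node hn k]
  exact eLpNorm_chordErr_le_sq hp hf (node_lt_node_succ hn k)

theorem eLpNorm_deriv_interpErr_le (hn : 0 < n) (hp : 1 ≤ p) (hp_top : p ≠ ∞)
    (hf : ContDiff ℝ 2 f) :
    eLpNorm (deriv (interpErr n f)) p (volume.restrict (Set.Ioo 0 1)) ≤
      (n : ℝ≥0∞)⁻¹ * eLpNorm (deriv (deriv f)) p (volume.restrict (Set.Ioo 0 1)) := by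
  refine eLpNorm_Ioo_le_of_forall_meshCell hn (one_pos.trans_le hp).ne' hp_top fun k hk => ?_
  rw [eLpNorm_deriv_interpErr_meshCell hn hk, ← ofReal_node_succ_sub_node hn k]
  exact eLpNorm_deriv_chordErr_le hp hf (node_lt_node_succ hn k)

end Estimates

theorem ae_differentiableAt_hat (hn : 0 < n) :
    ∀ᵐ x, ∀ i, DifferentiableAt ℝ (hat n i) x :=
  ae_all_iff.2 fun i => (lipschitzWith_hat hn i).ae_differentiableAt_real

theorem differentiableAt_interpErr {f : ℝ → ℝ} (hf : DifferentiableAt ℝ f x)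
    (hx : ∀ i, DifferentiableAt ℝ (hat n i) x) : DifferentiableAt ℝ (interpErr n f) x :=
  hf.sub (DifferentiableAt.fun_sum fun i _ => (hx i).const_mul _)

end Mesh

/-! ### Partial derivatives on the square -/

local notation "μΩ" => Measure.restrict volume Omega2

theorem isOpen_Omega2 : IsOpen Omega2 := isOpen_Ioo.prod isOpen_Ioo

theorem Omega2_subset_unitSquare : Omega2 ⊆ unitSquare :=
  Set.prod_mono Set.Ioo_subset_Icc_self Set.Ioo_subset_Icc_self

theorem restrict_Omega2 :
    μΩ = (volume.restrict (Set.Ioo (0 : ℝ) 1)).prod (volume.restrict (Set.Ioo (0 : ℝ) 1)) :=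
  (Measure.prod_restrict _ _).symm

theorem eLpNorm_comp_swap_Omega2 (g : ℝ × ℝ → ℝ) (p : ℝ≥0∞) :
    eLpNorm (g ∘ Prod.swap) p μΩ = eLpNorm g p μΩ := by
  have hswap : MeasurableEmbedding (Prod.swap : ℝ × ℝ → ℝ × ℝ) :=
    MeasurableEquiv.prodComm.measurableEmbedding
  rw [← hswap.eLpNorm_map_measure, restrict_Omega2, Measure.prod_swap]

theorem aestronglyMeasurable_comp_swap_Omega2 {g : ℝ × ℝ → ℝ}
    (hg : AEStronglyMeasurable g μΩ) : AEStronglyMeasurable (g ∘ Prod.swap) μΩ := by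
  rw [restrict_Omega2] at hg ⊢
  exact hg.comp_measurePreserving Measure.measurePreserving_swap

section PartialDerivatives

variable {v : ℝ × ℝ → ℝ}

theorem pderivX_comp_swap (v : ℝ × ℝ → ℝ) : pderivX (v ∘ Prod.swap) = pderivY v ∘ Prod.swap := rfl

theorem pderivY_comp_swap (v : ℝ × ℝ → ℝ) : pderivY (v ∘ Prod.swap) = pderivX v ∘ Prod.swap := rfl

theorem measurable_pderivY (hv : Continuous v) : Measurable (pderivY v) :=
  measurable_deriv_with_param (f := fun x y => v (x, y)) hv

theorem measurable_pderivX (hv : Continuous v) : Measurable (pderivX v) :=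
  (measurable_pderivY (hv.comp continuous_swap)).comp measurable_swap

theorem pderivX_eq_fderiv (hv : Differentiable ℝ v) :
    pderivX v = fun p => fderiv ℝ v p (1, 0) := by
  funext p
  exact ((hv p).hasFDerivAt.comp_hasDerivAt p.1
    ((hasDerivAt_id p.1).prodMk (hasDerivAt_const p.1 p.2))).deriv

theorem pderivY_eq_fderiv (hv : Differentiable ℝ v) :
    pderivY v = fun p => fderiv ℝ v p (0, 1) := by
  funext p
  exact ((hv p).hasFDerivAt.comp_hasDerivAt p.2
    ((hasDerivAt_const p.2 p.1).prodMk (hasDerivAt_id p.2))).deriv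

theorem contDiff_pderivX {m n : WithTop ℕ∞} (hv : ContDiff ℝ n v) (hmn : m + 1 ≤ n) :
    ContDiff ℝ m (pderivX v) := by
  rw [pderivX_eq_fderiv (hv.differentiable (one_pos.trans_le (le_add_self.trans hmn)).ne')]
  exact (hv.fderiv_right hmn).clm_apply contDiff_const

theorem contDiff_pderivY {m n : WithTop ℕ∞} (hv : ContDiff ℝ n v) (hmn : m + 1 ≤ n) :
    ContDiff ℝ m (pderivY v) := by
  rw [pderivY_eq_fderiv (hv.differentiable (one_pos.trans_le (le_add_self.trans hmn)).ne')]
  exact (hv.fderiv_right hmn).clm_apply contDiff_const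

theorem pderivX_pderivY_comm (hv : ContDiff ℝ 2 v) :
    pderivX (pderivY v) = pderivY (pderivX v) := by
  have hdiff : Differentiable ℝ v := hv.differentiable two_ne_zero
  have hfderiv : Differentiable ℝ (fderiv ℝ v) :=
    (hv.fderiv_right (m := 1) le_rfl).differentiable one_ne_zero
  have hsecond : ∀ e p, fderiv ℝ (fun q => fderiv ℝ v q e) p =
      (fderiv ℝ (fderiv ℝ v) p).flip e := fun e p => by
    simpa using ((hfderiv p).hasFDerivAt.clm_apply (hasFDerivAt_const e p)).fderiv
  rw [pderivX_eq_fderiv hdiff, pderivY_eq_fderiv hdiff, pderivX_eq_fderiv (by fun_prop),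
    pderivY_eq_fderiv (by fun_prop)]
  funext p
  rw [hsecond, hsecond]
  exact hv.contDiffAt.isSymmSndFDerivAt (by simp) _ _

theorem uxxyy_eq_pderivY_pderivY (hv : ContDiff ℝ 4 v) :
    uxxyy v = pderivY (pderivY (pderivX (pderivX v))) := by
  have hx : ContDiff ℝ 3 (pderivX v) := contDiff_pderivX hv (by norm_num)
  have hy : ContDiff ℝ 3 (pderivY v) := contDiff_pderivY hv (by norm_num)
  have hyx : ContDiff ℝ 2 (pderivY (pderivX v)) := contDiff_pderivY hx (by norm_num)
  calc pderivX (pderivX (pderivY (pderivY v)))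
      = pderivX (pderivY (pderivX (pderivY v))) := by
        rw [pderivX_pderivY_comm (hy.of_le (by norm_num))]
    _ = pderivX (pderivY (pderivY (pderivX v))) := by
        rw [pderivX_pderivY_comm (hv.of_le (by norm_num))]
    _ = pderivY (pderivX (pderivY (pderivX v))) := pderivX_pderivY_comm hyx
    _ = pderivY (pderivY (pderivX (pderivX v))) := by
        rw [pderivX_pderivY_comm (hx.of_le (by norm_num))]

end PartialDerivatives

/-! ### Directional interpolation errors -/

/-- The error `u - I_{n,0} u` of interpolation in the `x`-direction only. -/
def errX (n : ℕ) (u : ℝ × ℝ → ℝ) : ℝ × ℝ → ℝ := fun p => interpErr n (fun x => u (x, p.2)) p.1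

/-- The error `u - I_{0,n} u` of interpolation in the `y`-direction only. -/
def errY (n : ℕ) (u : ℝ × ℝ → ℝ) : ℝ × ℝ → ℝ := fun p => interpErr n (fun y => u (p.1, y)) p.2

theorem errY_comp_swap (n : ℕ) (u : ℝ × ℝ → ℝ) :
    errY n (u ∘ Prod.swap) = errX n u ∘ Prod.swap := rfl

section DirectionalError

variable {n m : ℕ} {v : ℝ × ℝ → ℝ} {p : ℝ≥0∞}

theorem continuous_errX (hn : 0 < n) (hv : Continuous v) : Continuous (errX n v) := by
  have hhat := fun i => (lipschitzWith_hat hn i).continuous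
  unfold errX interpErr
  fun_prop

theorem continuous_errY (hn : 0 < n) (hv : Continuous v) : Continuous (errY n v) := by
  have hhat := fun i => (lipschitzWith_hat hn i).continuous
  unfold errY interpErr
  fun_prop

theorem contDiff_errY_slice {k : WithTop ℕ∞} {y : ℝ} (hv : ContDiff ℝ k v) :
    ContDiff ℝ k fun x => errY n v (x, y) :=
  ContDiff.sub (by fun_prop) (ContDiff.sum fun j _ =>
    ContDiff.mul (by fun_prop) (contDiff_const (c := hat n j y)))

theorem pderivX_errY (hv : Differentiable ℝ v) :
    pderivX (errY n v) = errY n (pderivX v) := by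
  have hslice : ∀ x y, HasDerivAt (fun t => v (t, y)) (pderivX v (x, y)) x := fun x y =>
    DifferentiableAt.hasDerivAt (by fun_prop)
  funext ⟨x, y⟩
  exact ((hslice x y).fun_sub
    (HasDerivAt.fun_sum fun (j : ℕ) _ => (hslice x (j / n)).mul_const (hat n j y))).deriv

theorem eLpNorm_errY_le (hn : 0 < n) (hp : 1 ≤ p) (hp_top : p ≠ ∞)
    (hv : ∀ x, ContDiff ℝ 1 fun y => v (x, y))
    (hmeas : AEStronglyMeasurable (pderivY v) μΩ) :
    eLpNorm (errY n v) p μΩ ≤ (n : ℝ≥0∞)⁻¹ * eLpNorm (pderivY v) p μΩ := by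
  rw [restrict_Omega2] at hmeas ⊢
  exact eLpNorm_prod_le_of_forall_slice (one_pos.trans_le hp).ne' hp_top hmeas fun x =>
    eLpNorm_interpErr_le hn hp hp_top (hv x)

theorem eLpNorm_errY_le_sq (hn : 0 < n) (hp : 1 ≤ p) (hp_top : p ≠ ∞)
    (hv : ∀ x, ContDiff ℝ 2 fun y => v (x, y))
    (hmeas : AEStronglyMeasurable (pderivY (pderivY v)) μΩ) :
    eLpNorm (errY n v) p μΩ ≤ (n : ℝ≥0∞)⁻¹ ^ 2 * eLpNorm (pderivY (pderivY v)) p μΩ := by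
  rw [restrict_Omega2] at hmeas ⊢
  exact eLpNorm_prod_le_of_forall_slice (one_pos.trans_le hp).ne' hp_top hmeas fun x =>
    eLpNorm_interpErr_le_sq hn hp hp_top (hv x)

theorem eLpNorm_pderivY_errY_le (hn : 0 < n) (hp : 1 ≤ p) (hp_top : p ≠ ∞)
    (hv : ∀ x, ContDiff ℝ 2 fun y => v (x, y))
    (hmeas : AEStronglyMeasurable (pderivY (pderivY v)) μΩ) :
    eLpNorm (pderivY (errY n v)) p μΩ ≤ (n : ℝ≥0∞)⁻¹ * eLpNorm (pderivY (pderivY v)) p μΩ := by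
  rw [restrict_Omega2] at hmeas ⊢
  exact eLpNorm_prod_le_of_forall_slice (one_pos.trans_le hp).ne' hp_top hmeas fun x =>
    eLpNorm_deriv_interpErr_le (f := fun y => v (x, y)) hn hp hp_top (hv x)

theorem eLpNorm_errX_le_sq (hn : 0 < n) (hp : 1 ≤ p) (hp_top : p ≠ ∞)
    (hv : ∀ y, ContDiff ℝ 2 fun x => v (x, y))
    (hmeas : AEStronglyMeasurable (pderivX (pderivX v)) μΩ) :
    eLpNorm (errX n v) p μΩ ≤ (n : ℝ≥0∞)⁻¹ ^ 2 * eLpNorm (pderivX (pderivX v)) p μΩ := by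
  have h := eLpNorm_errY_le_sq (v := v ∘ Prod.swap) hn hp hp_top hv
    (aestronglyMeasurable_comp_swap_Omega2 hmeas)
  rwa [errY_comp_swap, pderivY_comp_swap, pderivY_comp_swap, eLpNorm_comp_swap_Omega2,
    eLpNorm_comp_swap_Omega2] at h

theorem eLpNorm_pderivX_errX_le (hn : 0 < n) (hp : 1 ≤ p) (hp_top : p ≠ ∞)
    (hv : ∀ y, ContDiff ℝ 2 fun x => v (x, y))
    (hmeas : AEStronglyMeasurable (pderivX (pderivX v)) μΩ) :
    eLpNorm (pderivX (errX n v)) p μΩ ≤ (n : ℝ≥0∞)⁻¹ * eLpNorm (pderivX (pderivX v)) p μΩ := by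
  have h := eLpNorm_pderivY_errY_le (v := v ∘ Prod.swap) hn hp hp_top hv
    (aestronglyMeasurable_comp_swap_Omega2 hmeas)
  rwa [errY_comp_swap, pderivY_comp_swap, pderivY_comp_swap, pderivY_comp_swap,
    eLpNorm_comp_swap_Omega2, eLpNorm_comp_swap_Omega2] at h

theorem pderivX_pderivX_errY (hv : ContDiff ℝ 2 v) :
    pderivX (pderivX (errY n v)) = errY n (pderivX (pderivX v)) := by
  rw [pderivX_errY (hv.differentiable two_ne_zero),
    pderivX_errY ((contDiff_pderivX hv (m := 1) le_rfl).differentiable one_ne_zero)]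

theorem eLpNorm_pderivX_pderivX_errY_le (hn : 0 < n) (hp : 1 ≤ p) (hp_top : p ≠ ∞)
    (hv : ContDiff ℝ 4 v) :
    eLpNorm (pderivX (pderivX (errY n v))) p μΩ ≤
      (n : ℝ≥0∞)⁻¹ ^ 2 * eLpNorm (uxxyy v) p μΩ := by
  have hxx : ContDiff ℝ 2 (pderivX (pderivX v)) :=
    contDiff_pderivX (contDiff_pderivX hv (m := 3) (by norm_num)) (by norm_num)
  have hxxyy : Measurable (pderivY (pderivY (pderivX (pderivX v)))) :=
    measurable_pderivY (contDiff_pderivY hxx (m := 1) le_rfl).continuous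
  rw [pderivX_pderivX_errY (hv.of_le (by norm_num)), uxxyy_eq_pderivY_pderivY hv]
  exact eLpNorm_errY_le_sq hn hp hp_top (fun x => by fun_prop) hxxyy.aestronglyMeasurable

theorem aestronglyMeasurable_pderivX_pderivX_errY (hn : 0 < n) (hv : ContDiff ℝ 2 v)
    {μ : Measure (ℝ × ℝ)} : AEStronglyMeasurable (pderivX (pderivX (errY n v))) μ := by
  have hxx : ContDiff ℝ 0 (pderivX (pderivX v)) :=
    contDiff_pderivX (contDiff_pderivX hv (m := 1) le_rfl) (by simp)
  rw [pderivX_pderivX_errY hv]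
  exact (continuous_errY hn hxx.continuous).aestronglyMeasurable

theorem eLpNorm_errX_errY_le (hn : 0 < n) (hm : 0 < m) (hp : 1 ≤ p) (hp_top : p ≠ ∞)
    (hv : ContDiff ℝ 4 v) :
    eLpNorm (errX n (errY m v)) p μΩ ≤
      (n : ℝ≥0∞)⁻¹ ^ 2 * (m : ℝ≥0∞)⁻¹ ^ 2 * eLpNorm (uxxyy v) p μΩ := by
  have hv₂ : ContDiff ℝ 2 v := hv.of_le (by norm_num)
  rw [mul_assoc]
  grw [eLpNorm_errX_le_sq hn hp hp_top (fun y => contDiff_errY_slice hv₂)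
      (aestronglyMeasurable_pderivX_pderivX_errY hm hv₂),
    eLpNorm_pderivX_pderivX_errY_le hm hp hp_top hv]

theorem eLpNorm_pderivX_errX_errY_le (hn : 0 < n) (hm : 0 < m) (hp : 1 ≤ p) (hp_top : p ≠ ∞)
    (hv : ContDiff ℝ 4 v) :
    eLpNorm (pderivX (errX n (errY m v))) p μΩ ≤
      (n : ℝ≥0∞)⁻¹ * (m : ℝ≥0∞)⁻¹ ^ 2 * eLpNorm (uxxyy v) p μΩ := by
  have hv₂ : ContDiff ℝ 2 v := hv.of_le (by norm_num)
  rw [mul_assoc]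
  grw [eLpNorm_pderivX_errX_le hn hp hp_top (fun y => contDiff_errY_slice hv₂)
      (aestronglyMeasurable_pderivX_pderivX_errY hm hv₂),
    eLpNorm_pderivX_pderivX_errY_le hm hp hp_top hv]

end DirectionalError

/-! ### The two-scale interpolation error -/

/-- The error `u - Î_{N,N} u` of two-scale interpolation. -/
def twoScaleErr (N σ : ℕ) (u : ℝ × ℝ → ℝ) : ℝ × ℝ → ℝ := fun p => u p - twoScale N σ u p

theorem errX_errY_apply (n m : ℕ) (u : ℝ × ℝ → ℝ) (q : ℝ × ℝ) :
    errX n (errY m u) q = u q - interpX n u q - interpY m u q + interp n m u q := by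
  simp only [errX, errY, interpErr, interpX, interpY, interp, sub_mul, Finset.sum_sub_distrib,
    Finset.sum_mul, mul_right_comm _ (hat m _ q.2)]
  ring

theorem twoScaleErr_eq (N σ : ℕ) (u : ℝ × ℝ → ℝ) :
    twoScaleErr N σ u = errX N u + errY N u - errX N (errY σ u) - errX σ (errY N u) +
      errX σ (errY σ u) := by
  funext q
  simp only [Pi.add_apply, Pi.sub_apply, errX_errY_apply]
  simp only [twoScaleErr, twoScale, errX, errY, interpErr, interpX, interpY]
  ring

theorem twoScaleErr_comp_swap (N σ : ℕ) (u : ℝ × ℝ → ℝ) :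
    twoScaleErr N σ (u ∘ Prod.swap) = twoScaleErr N σ u ∘ Prod.swap := by
  have hinterp : ∀ n m q, interp n m (u ∘ Prod.swap) q = interp m n u q.swap := fun n m q => by
    simp only [interp, Function.comp, Prod.swap_prod_mk, Prod.fst_swap, Prod.snd_swap,
      mul_right_comm _ (hat n _ q.1)]
    exact Finset.sum_comm
  funext q
  simp only [twoScaleErr, twoScale, hinterp, Function.comp]
  ring

section TwoScaleError

variable {N σ : ℕ} {u : ℝ × ℝ → ℝ} {p : ℝ≥0∞}

theorem ae_differentiableAt_hat_fst (hN : 0 < N) :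
    ∀ᵐ q : ℝ × ℝ ∂μΩ, ∀ i, DifferentiableAt ℝ (hat N i) q.1 :=
  ae_restrict_of_ae (Measure.quasiMeasurePreserving_fst.ae (ae_differentiableAt_hat hN))

theorem pderivX_twoScaleErr (hN : 0 < N) (hσ : 0 < σ) (hu : ContDiff ℝ 1 u) :
    pderivX (twoScaleErr N σ u) =ᵐ[μΩ]
      pderivX (errX N u) + pderivX (errY N u) - pderivX (errX N (errY σ u)) -
        pderivX (errX σ (errY N u)) + pderivX (errX σ (errY σ u)) := by
  -- `deriv` is additive only where every summand is differentiable, that is, off the mesh lines.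
  filter_upwards [ae_differentiableAt_hat_fst hN, ae_differentiableAt_hat_fst hσ]
    with ⟨x, y⟩ hNx hσx
  have hu' : DifferentiableAt ℝ (fun t => u (t, y)) x := by
    have := hu.differentiable one_ne_zero
    fun_prop
  have hY : ∀ m, DifferentiableAt ℝ (fun t => errY m u (t, y)) x := fun m =>
    (contDiff_errY_slice hu).differentiable one_ne_zero x
  have hX : ∀ {n v}, (∀ i, DifferentiableAt ℝ (hat n i) x) →
      DifferentiableAt ℝ (fun t => v (t, y)) x →
      HasDerivAt (fun t => errX n v (t, y)) (pderivX (errX n v) (x, y)) x := fun hn hv =>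
    (differentiableAt_interpErr hv hn).hasDerivAt
  rw [twoScaleErr_eq]
  exact (((((hX hNx hu').add (hY N).hasDerivAt).sub (hX hNx (hY σ))).sub
    (hX hσx (hY N))).add (hX hσx (hY σ))).deriv

theorem rate_sum_le {r s a b d : ℝ≥0∞} (hr : r ≤ 1) (hs : s ≤ 1) :
    r * a + r * b + r * s ^ 2 * d + s * r ^ 2 * d + s * s ^ 2 * d ≤
      2 * (r + s ^ 3) * (a + b + d) :=
  calc r * a + r * b + r * s ^ 2 * d + s * r ^ 2 * d + s * s ^ 2 * d
      ≤ r * a + r * b + r * 1 ^ 2 * d + 1 * (r * 1) * d + s * s ^ 2 * d := by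
        rw [sq r]
        gcongr
    _ ≤ r * a + r * b + r * 1 ^ 2 * d + 1 * (r * 1) * d + s * s ^ 2 * d +
          (r * (a + b) + s ^ 3 * (2 * a + 2 * b + d)) := le_self_add
    _ = 2 * (r + s ^ 3) * (a + b + d) := by ring

theorem inv_natCast_le_one (hN : 0 < N) : (N : ℝ≥0∞)⁻¹ ≤ 1 :=
  ENNReal.inv_le_one.2 (mod_cast hN)

theorem eLpNorm_pderivX_twoScaleErr_le (hN : 0 < N) (hσ : 0 < σ) (hp : 1 ≤ p) (hp_top : p ≠ ∞)
    (hu : ContDiff ℝ 4 u) :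
    eLpNorm (pderivX (twoScaleErr N σ u)) p μΩ ≤
      2 * ((N : ℝ≥0∞)⁻¹ + (σ : ℝ≥0∞)⁻¹ ^ 3) *
        (eLpNorm (pderivX (pderivX u)) p μΩ + eLpNorm (pderivX (pderivY u)) p μΩ +
          eLpNorm (uxxyy u) p μΩ) := by
  have hu₂ : ContDiff ℝ 2 u := hu.of_le (by norm_num)
  have hx : ContDiff ℝ 1 (pderivX u) := contDiff_pderivX hu₂ le_rfl
  have hmeas : ∀ {v}, Continuous v → AEStronglyMeasurable (pderivX v) μΩ := fun hv =>
    (measurable_pderivX hv).aestronglyMeasurable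
  have hY : ∀ {m}, 0 < m → Continuous (errY m u) := fun hm => continuous_errY hm hu.continuous
  have hXY : ∀ {n m}, 0 < n → 0 < m → Continuous (errX n (errY m u)) := fun hn hm =>
    continuous_errX hn (hY hm)
  have hXN : eLpNorm (pderivX (errX N u)) p μΩ ≤
      (N : ℝ≥0∞)⁻¹ * eLpNorm (pderivX (pderivX u)) p μΩ :=
    eLpNorm_pderivX_errX_le hN hp hp_top (fun y => by fun_prop) (hmeas hx.continuous)
  have hYN : eLpNorm (pderivX (errY N u)) p μΩ ≤
      (N : ℝ≥0∞)⁻¹ * eLpNorm (pderivX (pderivY u)) p μΩ := by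
    rw [pderivX_errY (hu₂.differentiable two_ne_zero), pderivX_pderivY_comm hu₂]
    exact eLpNorm_errY_le hN hp hp_top (fun x => by fun_prop)
      (measurable_pderivY hx.continuous).aestronglyMeasurable
  grw [eLpNorm_congr_ae (pderivX_twoScaleErr hN hσ (hu.of_le (by norm_num))),
    eLpNorm_add_sub_sub_add_le hp (hmeas (continuous_errX hN hu.continuous)) (hmeas (hY hN))
      (hmeas (hXY hN hσ)) (hmeas (hXY hσ hN)) (hmeas (hXY hσ hσ)),
    hXN, hYN, eLpNorm_pderivX_errX_errY_le hN hσ hp hp_top hu,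
    eLpNorm_pderivX_errX_errY_le hσ hN hp hp_top hu,
    eLpNorm_pderivX_errX_errY_le hσ hσ hp hp_top hu]
  exact rate_sum_le (inv_natCast_le_one hN) (inv_natCast_le_one hσ)

theorem eLpNorm_pderivY_twoScaleErr_le (hN : 0 < N) (hσ : 0 < σ) (hp : 1 ≤ p) (hp_top : p ≠ ∞)
    (hu : ContDiff ℝ 4 u) :
    eLpNorm (pderivY (twoScaleErr N σ u)) p μΩ ≤
      2 * ((N : ℝ≥0∞)⁻¹ + (σ : ℝ≥0∞)⁻¹ ^ 3) *
        (eLpNorm (pderivY (pderivY u)) p μΩ + eLpNorm (pderivX (pderivY u)) p μΩ +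
          eLpNorm (uxxyy u) p μΩ) := by
  have huxxyy : uxxyy (u ∘ Prod.swap) = uxxyy u ∘ Prod.swap := by
    rw [uxxyy_eq_pderivY_pderivY hu]
    rfl
  have h := eLpNorm_pderivX_twoScaleErr_le hN hσ hp hp_top (u := u ∘ Prod.swap)
    (hu.comp (contDiff_snd.prodMk contDiff_fst))
  rwa [twoScaleErr_comp_swap, huxxyy, pderivX_comp_swap, pderivX_comp_swap, pderivX_comp_swap,
    pderivY_comp_swap, pderivX_comp_swap, eLpNorm_comp_swap_Omega2, eLpNorm_comp_swap_Omega2,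
    eLpNorm_comp_swap_Omega2, eLpNorm_comp_swap_Omega2,
    ← pderivX_pderivY_comm (hu.of_le (by norm_num))] at h

theorem eLpNorm_twoScaleErr_le (hN : 0 < N) (hσ : 0 < σ) (hp : 1 ≤ p) (hp_top : p ≠ ∞)
    (hu : ContDiff ℝ 4 u) :
    eLpNorm (twoScaleErr N σ u) p μΩ ≤
      2 * ((N : ℝ≥0∞)⁻¹ + (σ : ℝ≥0∞)⁻¹ ^ 3) *
        (eLpNorm (pderivX (pderivX u)) p μΩ + eLpNorm (pderivY (pderivY u)) p μΩ +
          eLpNorm (uxxyy u) p μΩ) := by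
  have hu₂ : ContDiff ℝ 2 u := hu.of_le (by norm_num)
  have hx : ContDiff ℝ 1 (pderivX u) := contDiff_pderivX hu₂ le_rfl
  have hy : ContDiff ℝ 1 (pderivY u) := contDiff_pderivY hu₂ le_rfl
  have hsq : ∀ {n : ℕ}, 0 < n → (n : ℝ≥0∞)⁻¹ ^ 2 ≤ (n : ℝ≥0∞)⁻¹ := fun hn =>
    pow_le_of_le_one zero_le (inv_natCast_le_one hn) two_ne_zero
  have hX : ∀ {n v}, 0 < n → Continuous v → AEStronglyMeasurable (errX n v) μΩ := fun hn hv =>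
    (continuous_errX hn hv).aestronglyMeasurable
  have hY : ∀ {m}, 0 < m → Continuous (errY m u) := fun hm => continuous_errY hm hu.continuous
  rw [twoScaleErr_eq]
  grw [eLpNorm_add_sub_sub_add_le hp (hX hN hu.continuous) (hY hN).aestronglyMeasurable
      (hX hN (hY hσ)) (hX hσ (hY hN)) (hX hσ (hY hσ)),
    eLpNorm_errX_le_sq hN hp hp_top (fun y => by fun_prop)
      (measurable_pderivX hx.continuous).aestronglyMeasurable,
    eLpNorm_errY_le_sq hN hp hp_top (fun x => by fun_prop)
      (measurable_pderivY hy.continuous).aestronglyMeasurable,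
    eLpNorm_errX_errY_le hN hσ hp hp_top hu, eLpNorm_errX_errY_le hσ hN hp hp_top hu,
    eLpNorm_errX_errY_le hσ hσ hp hp_top hu]
  refine le_trans ?_ (rate_sum_le (inv_natCast_le_one hN) (inv_natCast_le_one hσ))
  gcongr <;> first | exact hsq hN | exact hsq hσ

end TwoScaleError

/-! ### The energy norm -/

theorem memLp_two_Omega2_of_continuous {g : ℝ × ℝ → ℝ} (hg : Continuous g) : MemLp g 2 μΩ := by
  have hcompact : IsCompact unitSquare := isCompact_Icc.prod isCompact_Icc
  exact (memLp_two_iff_integrable_sq hg.aestronglyMeasurable).2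
    (((hg.pow 2).continuousOn.integrableOn_compact hcompact).mono_set
      Omega2_subset_unitSquare)

theorem ofReal_L2norm {g : ℝ × ℝ → ℝ} (hg : MemLp g 2 μΩ) :
    ENNReal.ofReal (L2norm g) = eLpNorm g 2 μΩ := by
  rw [hg.eLpNorm_eq_integral_rpow_norm two_ne_zero ENNReal.ofNat_ne_top, L2norm,
    Real.sqrt_eq_rpow]
  simp

theorem ofReal_energyNorm_le {w : ℝ × ℝ → ℝ} (hx : AEStronglyMeasurable (pderivX w) μΩ)
    (hy : AEStronglyMeasurable (pderivY w) μΩ) :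
    ENNReal.ofReal (energyNorm w) ≤
      eLpNorm (pderivX w) 2 μΩ + eLpNorm (pderivY w) 2 μΩ + eLpNorm w 2 μΩ := by
  have hpos : 0 ≤ ∫ p in Omega2, (pderivX w p ^ 2 + pderivY w p ^ 2 + w p ^ 2) :=
    integral_nonneg fun p => by positivity
  rw [← ENNReal.pow_le_pow_left_iff two_ne_zero]
  calc ENNReal.ofReal (energyNorm w) ^ 2
      = ‖∫ p in Omega2, (pderivX w p ^ 2 + pderivY w p ^ 2 + w p ^ 2)‖ₑ := by
        rw [energyNorm, ← ENNReal.ofReal_pow (Real.sqrt_nonneg _), Real.sq_sqrt hpos,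
          Real.enorm_of_nonneg hpos]
    _ ≤ ∫⁻ p in Omega2, (‖pderivX w p‖ₑ ^ 2 + ‖pderivY w p‖ₑ ^ 2 + ‖w p‖ₑ ^ 2) := by
        refine (enorm_integral_le_lintegral_enorm _).trans (lintegral_mono fun p => ?_)
        simp only [← enorm_pow]
        grw [enorm_add_le, enorm_add_le]
    _ = eLpNorm (pderivX w) 2 μΩ ^ 2 + eLpNorm (pderivY w) 2 μΩ ^ 2 + eLpNorm w 2 μΩ ^ 2 := by
        have hxy : AEMeasurable (fun p => ‖pderivX w p‖ₑ ^ 2 + ‖pderivY w p‖ₑ ^ 2) μΩ :=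
          (hx.enorm.pow_const 2).add (hy.enorm.pow_const 2)
        rw [lintegral_add_left' hxy, lintegral_add_left' (hx.enorm.pow_const 2),
          ← sq_eLpNorm_two, ← sq_eLpNorm_two, ← sq_eLpNorm_two]
    _ ≤ (eLpNorm (pderivX w) 2 μΩ + eLpNorm (pderivY w) 2 μΩ + eLpNorm w 2 μΩ) ^ 2 := by
        grw [pow_add_pow_le zero_le zero_le two_ne_zero, pow_add_pow_le zero_le zero_le two_ne_zero]

theorem continuous_twoScaleErr {N σ : ℕ} {u : ℝ × ℝ → ℝ} (hN : 0 < N) (hσ : 0 < σ)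
    (hu : Continuous u) : Continuous (twoScaleErr N σ u) := by
  have hhatN := fun i => (lipschitzWith_hat hN i).continuous
  have hhatσ := fun i => (lipschitzWith_hat hσ i).continuous
  unfold twoScaleErr twoScale interp
  fun_prop

theorem ofReal_semi2_add_L2norm_uxxyy {u : ℝ × ℝ → ℝ} (hu : ContDiff ℝ 4 u) :
    ENNReal.ofReal (semi2 u + L2norm (uxxyy u)) =
      eLpNorm (pderivX (pderivX u)) 2 μΩ + eLpNorm (pderivX (pderivY u)) 2 μΩ +
        eLpNorm (pderivY (pderivY u)) 2 μΩ + eLpNorm (uxxyy u) 2 μΩ := by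
  have hx : ContDiff ℝ 3 (pderivX u) := contDiff_pderivX hu (by norm_num)
  have hy : ContDiff ℝ 3 (pderivY u) := contDiff_pderivY hu (by norm_num)
  have hxx : ContDiff ℝ 2 (pderivX (pderivX u)) := contDiff_pderivX hx (by norm_num)
  have hxy : ContDiff ℝ 2 (pderivX (pderivY u)) := contDiff_pderivX hy (by norm_num)
  have hyy : ContDiff ℝ 2 (pderivY (pderivY u)) := contDiff_pderivY hy (by norm_num)
  have hxyy : ContDiff ℝ 1 (pderivX (pderivY (pderivY u))) := contDiff_pderivX hyy le_rfl
  have hxxyy : ContDiff ℝ 0 (uxxyy u) := contDiff_pderivX hxyy (by simp)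
  have hL2 : ∀ {g}, Continuous g → ENNReal.ofReal (L2norm g) = eLpNorm g 2 μΩ := fun hg =>
    ofReal_L2norm (memLp_two_Omega2_of_continuous hg)
  have hpos : ∀ v, 0 ≤ L2norm v := fun v => Real.sqrt_nonneg _
  rw [semi2, ENNReal.ofReal_add (by simp [hpos, add_nonneg]) (hpos _),
    ENNReal.ofReal_add (by simp [hpos, add_nonneg]) (hpos _), ENNReal.ofReal_add (hpos _) (hpos _),
    hL2 hxx.continuous, hL2 hxy.continuous, hL2 hyy.continuous, hL2 hxxyy.continuous]

theorem ofReal_rate {N σ : ℕ} (hN : 0 < N) (hσ : 0 < σ) :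
    ENNReal.ofReal ((N : ℝ)⁻¹ + ((σ : ℝ) ^ 3)⁻¹) = (N : ℝ≥0∞)⁻¹ + (σ : ℝ≥0∞)⁻¹ ^ 3 := by
  have hinv : ∀ {n : ℕ}, 0 < n → ENNReal.ofReal (n : ℝ)⁻¹ = (n : ℝ≥0∞)⁻¹ := fun hn => by
    rw [ENNReal.ofReal_inv_of_pos (Nat.cast_pos.2 hn), ENNReal.ofReal_natCast]
  rw [← inv_pow, ENNReal.ofReal_add (by positivity) (by positivity),
    ENNReal.ofReal_pow (by positivity), hinv hN, hinv hσ]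

theorem energyNorm_twoScaleErr_le_of_contDiff {N σ : ℕ} {u : ℝ × ℝ → ℝ} (hN : 0 < N)
    (hσ : 0 < σ) (hu : ContDiff ℝ 4 u) :
    energyNorm (twoScaleErr N σ u) ≤
      6 * ((N : ℝ)⁻¹ + ((σ : ℝ) ^ 3)⁻¹) * (semi2 u + L2norm (uxxyy u)) := by
  have hw := continuous_twoScaleErr hN hσ hu.continuous
  have hS : 0 ≤ semi2 u + L2norm (uxxyy u) := by
    unfold semi2 L2norm
    positivity
  rw [← ENNReal.ofReal_le_ofReal_iff (by positivity), ENNReal.ofReal_mul (by positivity),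
    ENNReal.ofReal_mul (by positivity), ofReal_semi2_add_L2norm_uxxyy hu, ofReal_rate hN hσ,
    ENNReal.ofReal_ofNat]
  set a := eLpNorm (pderivX (pderivX u)) 2 μΩ
  set b := eLpNorm (pderivX (pderivY u)) 2 μΩ
  set c := eLpNorm (pderivY (pderivY u)) 2 μΩ
  set d := eLpNorm (uxxyy u) 2 μΩ
  set ρ := (N : ℝ≥0∞)⁻¹ + (σ : ℝ≥0∞)⁻¹ ^ 3
  calc ENNReal.ofReal (energyNorm (twoScaleErr N σ u))
      ≤ 2 * ρ * (a + b + d) + 2 * ρ * (c + b + d) + 2 * ρ * (a + c + d) := by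
        grw [ofReal_energyNorm_le (measurable_pderivX hw).aestronglyMeasurable
            (measurable_pderivY hw).aestronglyMeasurable,
          eLpNorm_pderivX_twoScaleErr_le hN hσ one_le_two ENNReal.ofNat_ne_top hu,
          eLpNorm_pderivY_twoScaleErr_le hN hσ one_le_two ENNReal.ofNat_ne_top hu,
          eLpNorm_twoScaleErr_le hN hσ one_le_two ENNReal.ofNat_ne_top hu]
    _ ≤ 2 * ρ * (a + b + d) + 2 * ρ * (c + b + d) + 2 * ρ * (a + c + d) +
          2 * ρ * (a + b + c) := le_self_add
    _ = 6 * ρ * (a + b + c + d) := by ring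

section Locality

variable {v w : ℝ × ℝ → ℝ}

theorem pderivX_eqOn {U : Set (ℝ × ℝ)} (hU : IsOpen U) (h : Set.EqOn v w U) :
    Set.EqOn (pderivX v) (pderivX w) U := fun q hq =>
  Filter.EventuallyEq.deriv_eq <| (Continuous.prodMk_left q.2).continuousAt.eventually <|
    h.eventuallyEq_of_mem (hU.mem_nhds hq)

theorem pderivY_eqOn {U : Set (ℝ × ℝ)} (hU : IsOpen U) (h : Set.EqOn v w U) :
    Set.EqOn (pderivY v) (pderivY w) U := fun q hq =>
  Filter.EventuallyEq.deriv_eq <| (Continuous.prodMk_right q.1).continuousAt.eventually <|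
    h.eventuallyEq_of_mem (hU.mem_nhds hq)

theorem L2norm_congr (h : Set.EqOn v w Omega2) : L2norm v = L2norm w := by
  unfold L2norm
  congr 1
  exact setIntegral_congr_fun isOpen_Omega2.measurableSet fun q hq => by simp only [h hq]

theorem energyNorm_congr (h : Set.EqOn v w Omega2) : energyNorm v = energyNorm w := by
  unfold energyNorm
  congr 1
  exact setIntegral_congr_fun isOpen_Omega2.measurableSet fun q hq => by
    simp only [h hq, pderivX_eqOn isOpen_Omega2 h hq, pderivY_eqOn isOpen_Omega2 h hq]

theorem semi2_congr (h : Set.EqOn v w Omega2) : semi2 v = semi2 w := by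
  have hx := pderivX_eqOn isOpen_Omega2 h
  have hy := pderivY_eqOn isOpen_Omega2 h
  rw [semi2, semi2, L2norm_congr (pderivX_eqOn isOpen_Omega2 hx),
    L2norm_congr (pderivX_eqOn isOpen_Omega2 hy), L2norm_congr (pderivY_eqOn isOpen_Omega2 hy)]

theorem uxxyy_eqOn (h : Set.EqOn v w Omega2) : Set.EqOn (uxxyy v) (uxxyy w) Omega2 :=
  pderivX_eqOn isOpen_Omega2 <| pderivX_eqOn isOpen_Omega2 <| pderivY_eqOn isOpen_Omega2 <|
    pderivY_eqOn isOpen_Omega2 h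

theorem interp_congr (h : Set.EqOn v w unitSquare) (n m : ℕ) : interp n m v = interp n m w := by
  have hnode : ∀ {k i : ℕ}, i ∈ range (k + 1) → (i : ℝ) / k ∈ Set.Icc (0 : ℝ) 1 := fun hi =>
    ⟨by positivity, div_le_one_of_le₀ (mod_cast Finset.mem_range_succ_iff.1 hi) (by positivity)⟩
  funext q
  refine Finset.sum_congr rfl fun i hi => Finset.sum_congr rfl fun j hj => ?_
  rw [h ⟨hnode hi, hnode hj⟩]

theorem twoScaleErr_eqOn (h : Set.EqOn v w unitSquare) (N σ : ℕ) :
    Set.EqOn (twoScaleErr N σ v) (twoScaleErr N σ w) unitSquare := fun q hq => by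
  simp only [twoScaleErr, twoScale, interp_congr h, h hq]

end Locality

theorem two_scale_interpolant_cube_root_bound_general {N σ : ℕ} (hN : 0 < N) (hσ : 0 < σ)
    {u : ℝ × ℝ → ℝ} (hu : C4Near u) :
    energyNorm (fun p => u p - twoScale N σ u p) ≤
      6 * ((N : ℝ)⁻¹ + ((σ : ℝ) ^ 3)⁻¹) * (semi2 u + L2norm (uxxyy u)) := by
  obtain ⟨U, hU, hsub, huU⟩ := hu
  obtain ⟨v, hv, hvu⟩ :=
    exists_contDiff_eqOn_of_isClosed (n := 4) (isClosed_Icc.prod isClosed_Icc) hU hsub huU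
  have hΩ : Set.EqOn v u Omega2 := hvu.mono Omega2_subset_unitSquare
  calc energyNorm (twoScaleErr N σ u)
      = energyNorm (twoScaleErr N σ v) :=
        (energyNorm_congr ((twoScaleErr_eqOn hvu N σ).mono Omega2_subset_unitSquare)).symm
    _ ≤ 6 * ((N : ℝ)⁻¹ + ((σ : ℝ) ^ 3)⁻¹) * (semi2 v + L2norm (uxxyy v)) :=
        energyNorm_twoScaleErr_le_of_contDiff hN hσ hv
    _ = 6 * ((N : ℝ)⁻¹ + ((σ : ℝ) ^ 3)⁻¹) * (semi2 u + L2norm (uxxyy u)) := by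
        rw [semi2_congr hΩ, L2norm_congr (uxxyy_eqOn hΩ)]

/-- With `N = M³` and `σ = M`, the two-scale interpolant satisfies
`|||u − Î_{N,N}u||| ≤ C N⁻¹ (|u|₂ + ‖∂⁴u/∂x²∂y²‖_{0,Ω})`. -/
theorem two_scale_interpolant_cube_root_bound :
    ∃ C : ℝ, 0 < C ∧ ∀ M : ℕ, 0 < M →
      ∀ u : ℝ × ℝ → ℝ, C4Near u → VanishOnBoundary u →
        energyNorm (fun p => u p - twoScale (M ^ 3) M u p) ≤
          C * ((M : ℝ) ^ 3)⁻¹ * (semi2 u + L2norm (uxxyy u)) := by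
  refine ⟨12, by norm_num, fun M hM u hu _ => ?_⟩
  convert two_scale_interpolant_cube_root_bound_general (pow_pos hM 3) hM hu using 2
  push_cast
  ring
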